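/- arXiv:1401.4532 — 2 statements merged into one kernel-verified Lean document; each statement's English description precedes it below -/
import Mathlib

section
/- Equality of mutual information of the first (minus) polarized bit-channels: for every σ > 0 and integer r ≥ 2 with M = 2^{r−2}, let q(z|b) = f_{σ,2}(z−b) on D = [0,2) and q'(z|b) = (1/M)·f_{σ,2}(z−b) on D' = [0,2^{r−1}), and define W⁻(z₁,z₂|u₁) = (1/2)·Σ_{u₂∈{0,1}} q(z₁|u₁⊕u₂)·q(z₂|u₂) and W'⁻ analogously from q'. Then Σ_{u₁∈{0,1}} (1/2)∬_{D'×D'} W'⁻(z₁,z₂|u₁)·log( W'⁻(z₁,z₂|u₁) / ( (1/2)(W'⁻(z₁,z₂|0)+W'⁻(z₁,z₂|1)) ) ) dz₁dz₂ = Σ_{u₁∈{0,1}} (1/2)∬_{D×D} W⁻(z₁,z₂|u₁)·log( W⁻(z₁,z₂|u₁) / ( (1/2)(W⁻(z₁,z₂|0)+W⁻(z₁,z₂|1)) ) ) dz₁dz₂. -/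
open MeasureTheory Real Filter

/-- The Gaussian density with zero mean and standard deviation `σ`. -/
noncomputable def gaussDen (σ x : ℝ) : ℝ :=
  (Real.sqrt (2 * Real.pi * σ ^ 2))⁻¹ * Real.exp (-x ^ 2 / (2 * σ ^ 2))

/-- The `αℤ`-aliased Gaussian density `f_{σ,α}(x) = Σ_{k∈ℤ} g_σ(x − kα)`. -/
noncomputable def aliasedDen (σ α x : ℝ) : ℝ := ∑' k : ℤ, gaussDen σ (x - (k : ℝ) * α)

/-- The differential entropy `h(α,σ)` of the `αℤ`-aliased Gaussian noise
on the fundamental region `[0, α)`. -/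
noncomputable def aliasedEnt (α σ : ℝ) : ℝ :=
  -∫ x in Set.Ico (0 : ℝ) α, aliasedDen σ α x * Real.log (aliasedDen σ α x)

/-- The `ℤ/2ℤ` partition channel density `q(z|b) = f_{σ,2}(z − b)` on `[0, 2)`. -/
noncomputable def qDen (σ z : ℝ) (b : ZMod 2) : ℝ := aliasedDen σ 2 (z - (b.val : ℝ))

/-- The first equivalent channel density `q'(z|b) = (1/M)·f_{σ,2}(z − b)` on `[0, 2^{r−1})`,
where `M = 2^{r−2}`. -/
noncomputable def qDen' (σ : ℝ) (r : ℕ) (z : ℝ) (b : ZMod 2) : ℝ :=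
  ((1 : ℝ) / 2 ^ (r - 2)) * aliasedDen σ 2 (z - (b.val : ℝ))

/-- The first (minus/worse) bit-channel obtained from one step of Arıkan's polarization
transform applied to two independent copies of a binary-input channel `p`. -/
noncomputable def Wminus (p : ℝ → ZMod 2 → ℝ) (z₁ z₂ : ℝ) (u₁ : ZMod 2) : ℝ :=
  ((1 : ℝ) / 2) * ∑ u₂ : ZMod 2, p z₁ (u₁ + u₂) * p z₂ u₂

/-- The second (plus/better) bit-channel obtained from one step of Arıkan's polarization
transform, whose output includes the bit `u₂`. -/
noncomputable def Wplus (p : ℝ → ZMod 2 → ℝ) (z₁ z₂ : ℝ) (u₂ u₁ : ZMod 2) : ℝ :=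
  ((1 : ℝ) / 2) * p z₁ (u₁ + u₂) * p z₂ u₂

/-! The minus transform is quadratic in the channel, so `M⁻¹ • q` has information density `M⁻²`
times that of `q`. This density is `2`-periodic in each output, and the square `[0, 2M)²` consists
of `M²` translates of `[0, 2)²`, so the two factors cancel. -/

section PeriodicIntegral

variable {E : Type*} [NormedAddCommGroup E] [NormedSpace ℝ E] {T : ℝ}

/- No integrability is assumed: if `f` is not integrable over one period, then it is not integrable
over `n ≠ 0` periods either, and both integrals are `0` by convention. -/
lemma setIntegral_Ico_nsmul_of_periodic {f : ℝ → E} (hf : Function.Periodic f T) (hT : 0 < T)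
    (a : ℝ) (n : ℕ) :
    ∫ x in Set.Ico a (a + n • T), f x = n • ∫ x in Set.Ico a (a + T), f x := by
  simp only [integral_Ico_eq_integral_Ioc]
  rw [← intervalIntegral.integral_of_le (le_add_of_nonneg_right (nsmul_nonneg hT.le n)),
    ← intervalIntegral.integral_of_le (le_add_of_nonneg_right hT.le)]
  by_cases integrable : IntervalIntegrable f volume a (a + T)
  · simpa only [natCast_zsmul] using
      hf.intervalIntegral_add_zsmul_eq n a (hf.intervalIntegrable hT.ne' integrable)
  · rcases eq_or_ne n 0 with rfl | hn
    · simp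
    have not_integrable : ¬IntervalIntegrable f volume a (a + n • T) := fun h =>
      integrable <| h.mono_set <| Set.uIcc_subset_uIcc_left <| Set.mem_uIcc_of_le
        (le_add_of_nonneg_right hT.le) (by gcongr; exact le_self_nsmul hT.le hn)
    rw [intervalIntegral.integral_undef integrable, intervalIntegral.integral_undef not_integrable,
      nsmul_zero]

lemma setIntegral_setIntegral_Ico_nsmul_of_periodic {f : ℝ → ℝ → E}
    (hf₁ : Function.Periodic f T) (hf₂ : ∀ x, Function.Periodic (f x) T) (hT : 0 < T)
    (a : ℝ) (n : ℕ) :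
    ∫ x in Set.Ico a (a + n • T), ∫ y in Set.Ico a (a + n • T), f x y =
      n ^ 2 • ∫ x in Set.Ico a (a + T), ∫ y in Set.Ico a (a + T), f x y := by
  have inner_periodic : Function.Periodic (fun x => ∫ y in Set.Ico a (a + T), f x y) T :=
    fun x => by simp only [hf₁ x]
  simp only [fun x => setIntegral_Ico_nsmul_of_periodic (hf₂ x) hT a n]
  simp only [← Nat.cast_smul_eq_nsmul ℝ n (∫ _ in _, _), integral_smul]
  rw [setIntegral_Ico_nsmul_of_periodic inner_periodic hT a n, Nat.cast_smul_eq_nsmul, ← mul_nsmul,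
    sq]

end PeriodicIntegral

/-- The contribution of the input bit `u` and the outputs `z₁, z₂` to the mutual information of the
minus channel of `p`; the prior `1/2` of `u` is not included. -/
noncomputable def minusInfoDensity (p : ℝ → ZMod 2 → ℝ) (u : ZMod 2) (z₁ z₂ : ℝ) : ℝ :=
  Wminus p z₁ z₂ u *
    Real.log (Wminus p z₁ z₂ u / (((1 : ℝ) / 2) * (Wminus p z₁ z₂ 0 + Wminus p z₁ z₂ 1)))

/-- The mutual information, under a uniform input bit, of the minus channel of the channel with
conditional density `p` and output region `D`. -/
noncomputable def minusMutualInfo (p : ℝ → ZMod 2 → ℝ) (D : Set ℝ) : ℝ :=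
  ∑ u : ZMod 2, ((1 : ℝ) / 2) * ∫ z₁ in D, ∫ z₂ in D, minusInfoDensity p u z₁ z₂

section MinusChannel

variable {p : ℝ → ZMod 2 → ℝ} {T : ℝ}

lemma Wminus_smul (c : ℝ) (p : ℝ → ZMod 2 → ℝ) (z₁ z₂ : ℝ) (u : ZMod 2) :
    Wminus (c • p) z₁ z₂ u = c ^ 2 * Wminus p z₁ z₂ u := by
  simp only [Wminus, Pi.smul_apply, smul_eq_mul, Finset.mul_sum]
  exact Finset.sum_congr rfl fun _ _ => by ring

lemma minusInfoDensity_smul (c : ℝ) (p : ℝ → ZMod 2 → ℝ) (u : ZMod 2) (z₁ z₂ : ℝ) :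
    minusInfoDensity (c • p) u z₁ z₂ = c ^ 2 * minusInfoDensity p u z₁ z₂ := by
  rcases eq_or_ne c 0 with rfl | hc
  · simp [minusInfoDensity, Wminus]
  · simp only [minusInfoDensity, Wminus_smul]
    rw [← mul_add, mul_left_comm ((1 : ℝ) / 2), mul_div_mul_left _ _ (pow_ne_zero 2 hc), mul_assoc]

lemma minusMutualInfo_smul (c : ℝ) (p : ℝ → ZMod 2 → ℝ) (D : Set ℝ) :
    minusMutualInfo (c • p) D = c ^ 2 * minusMutualInfo p D := by
  simp only [minusMutualInfo, minusInfoDensity_smul, integral_const_mul, Finset.mul_sum,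
    mul_left_comm]

lemma minusInfoDensity_periodic_left (hp : Function.Periodic p T) (u : ZMod 2) :
    Function.Periodic (minusInfoDensity p u) T :=
  fun z₁ => by ext z₂; simp only [minusInfoDensity, Wminus, hp z₁]

lemma minusInfoDensity_periodic_right (hp : Function.Periodic p T) (u : ZMod 2) (z₁ : ℝ) :
    Function.Periodic (minusInfoDensity p u z₁) T :=
  fun z₂ => by simp only [minusInfoDensity, Wminus, hp z₂]

lemma minusMutualInfo_Ico_nsmul (hp : Function.Periodic p T) (hT : 0 < T) (a : ℝ) (n : ℕ) :
    minusMutualInfo p (Set.Ico a (a + n • T)) =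
      (n : ℝ) ^ 2 * minusMutualInfo p (Set.Ico a (a + T)) := by
  simp only [minusMutualInfo, Finset.mul_sum]
  refine Finset.sum_congr rfl fun u _ => ?_
  rw [setIntegral_setIntegral_Ico_nsmul_of_periodic (minusInfoDensity_periodic_left hp u)
    (minusInfoDensity_periodic_right hp u) hT, nsmul_eq_mul, Nat.cast_pow, mul_left_comm]

theorem minus_bit_channel_mutual_information_eq_general (hp : Function.Periodic p T) (hT : 0 < T)
    (a : ℝ) {n : ℕ} (hn : n ≠ 0) :
    minusMutualInfo ((n : ℝ)⁻¹ • p) (Set.Ico a (a + n • T)) =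
      minusMutualInfo p (Set.Ico a (a + T)) := by
  have hn' : (n : ℝ) ≠ 0 := Nat.cast_ne_zero.mpr hn
  rw [minusMutualInfo_smul, minusMutualInfo_Ico_nsmul hp hT, inv_pow,
    inv_mul_cancel_left₀ (pow_ne_zero 2 hn')]

end MinusChannel

lemma aliasedDen_periodic (σ α : ℝ) : Function.Periodic (aliasedDen σ α) α := fun x => by
  unfold aliasedDen
  rw [← (Equiv.addRight (1 : ℤ)).tsum_eq]
  refine tsum_congr fun k => congrArg (gaussDen σ) ?_
  rw [Equiv.coe_addRight]
  push_cast
  ring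

lemma qDen_periodic (σ : ℝ) : Function.Periodic (qDen σ) 2 :=
  fun z => funext fun _ => (aliasedDen_periodic σ 2).sub_const _ z

lemma qDen'_eq_smul_qDen (σ : ℝ) (r : ℕ) :
    qDen' σ r = ((2 ^ (r - 2) : ℕ) : ℝ)⁻¹ • qDen σ := by
  ext z b
  simp [qDen', qDen]

lemma two_pow_pred_eq_nsmul_two {r : ℕ} (hr : 2 ≤ r) :
    (2 : ℝ) ^ (r - 1) = 2 ^ (r - 2) • (2 : ℝ) := by
  rw [nsmul_eq_mul, Nat.cast_pow, Nat.cast_ofNat, ← pow_succ]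
  congr 1
  omega

/-- equality of the mutual information of the first (minus) polarized
bit-channels constructed from the first equivalent channel and from the `ℤ/2ℤ`
partition channel. -/
theorem minus_bit_channel_mutual_information_eq (σ : ℝ) (hσ : 0 < σ) (r : ℕ) (hr : 2 ≤ r) :
    ∑ u₁ : ZMod 2, ((1 : ℝ) / 2) *
        ∫ z₁ in Set.Ico (0 : ℝ) ((2 : ℝ) ^ (r - 1)),
          ∫ z₂ in Set.Ico (0 : ℝ) ((2 : ℝ) ^ (r - 1)),
            Wminus (qDen' σ r) z₁ z₂ u₁ *
              Real.log (Wminus (qDen' σ r) z₁ z₂ u₁ /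
                (((1 : ℝ) / 2) * (Wminus (qDen' σ r) z₁ z₂ 0 + Wminus (qDen' σ r) z₁ z₂ 1))) =
      ∑ u₁ : ZMod 2, ((1 : ℝ) / 2) *
        ∫ z₁ in Set.Ico (0 : ℝ) (2 : ℝ),
          ∫ z₂ in Set.Ico (0 : ℝ) (2 : ℝ),
            Wminus (qDen σ) z₁ z₂ u₁ *
              Real.log (Wminus (qDen σ) z₁ z₂ u₁ /
                (((1 : ℝ) / 2) * (Wminus (qDen σ) z₁ z₂ 0 + Wminus (qDen σ) z₁ z₂ 1))) := by
  change minusMutualInfo (qDen' σ r) (Set.Ico 0 (2 ^ (r - 1))) =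
    minusMutualInfo (qDen σ) (Set.Ico 0 2)
  simpa only [zero_add, qDen'_eq_smul_qDen, two_pow_pred_eq_nsmul_two hr] using
    minus_bit_channel_mutual_information_eq_general (qDen_periodic σ) two_pos 0
      (pow_ne_zero (r - 2) two_ne_zero)
end

section
/- The differential entropy of αℤ-aliased Gaussian noise is at most that of the unaliased Gaussian: for all α > 0 and σ > 0, h(α,σ) ≤ (1/2)·log(2πeσ²); in particular the quantities ε_b = (1/2)log(2πeσ_b²) − h(α,σ_b) and ε_e = (1/2)log(2πeσ_e²) − h(α,σ_e) appearing in the secrecy-rate computation are nonnegative. -/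
open MeasureTheory Real Filter

/-!
Write `φ t = -t log t`. For nonnegative `a k` with sum `A`, every `a k ≤ A`, so
`∑ a k log (a k) ≤ ∑ a k log A = A log A`; that is, `φ (∑ a k) ≤ ∑ φ (a k)`. Applying this to the
translates of a density over a fundamental domain and unfolding the integral of the right-hand side
shows that folding a density never increases its differential entropy. For the Gaussian, the folded
density is a theta function, hence continuous, so its entropy integral over a period converges.
-/

open ProbabilityTheory
open scoped NNReal ENNReal

/-- The differential entropy `-∫ f log f ∂μ` of a density `f` with respect to `μ`. It takes the
junk value `0` when `f log f` is not integrable. -/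
noncomputable def diffEntropy {X : Type*} [MeasurableSpace X] (μ : Measure X) (f : X → ℝ) : ℝ :=
  ∫ x, negMulLog (f x) ∂μ

lemma negMulLog_le_of_hasSum {ι : Type*} {a : ι → ℝ} {A B : ℝ} (ha : ∀ i, 0 ≤ a i)
    (hA : HasSum a A) (hB : HasSum (fun i ↦ negMulLog (a i)) B) : negMulLog A ≤ B := by
  have term_le (i : ι) : a i * -log A ≤ negMulLog (a i) := by
    rcases (ha i).eq_or_lt with h | h
    · simp [← h]
    · have : log (a i) ≤ log A := log_le_log h (le_hasSum hA i fun j _ ↦ ha j)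
      rw [negMulLog, neg_mul_comm]
      gcongr
  rw [negMulLog, neg_mul_comm]
  exact hasSum_le term_le (hA.mul_right _) hB

lemma integrable_tsum {X ι : Type*} [MeasurableSpace X] [Countable ι] {μ : Measure X}
    {F : ι → X → ℝ} (hF : ∀ i, AEStronglyMeasurable (F i) μ)
    (hsum : ∑' i, ∫⁻ x, ‖F i x‖ₑ ∂μ ≠ ∞) : Integrable (fun x ↦ ∑' i, F i x) μ := by
  refine ⟨(AEMeasurable.tsum fun i ↦ (hF i).aemeasurable).aestronglyMeasurable, ?_⟩
  calc ∫⁻ x, ‖∑' i, F i x‖ₑ ∂μ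
      ≤ ∫⁻ x, ∑' i, ‖F i x‖ₑ ∂μ := lintegral_mono fun _ ↦ enorm_tsum_le_tsum_enorm
    _ = ∑' i, ∫⁻ x, ‖F i x‖ₑ ∂μ := lintegral_tsum fun i ↦ (hF i).enorm
    _ < ∞ := hsum.lt_top

section FundamentalDomain

variable {G X : Type*} [AddGroup G] [AddAction G X] [MeasurableSpace X]
  [MeasurableConstVAdd G X] {μ : Measure X} [VAddInvariantMeasure G X μ] {s : Set X} {f : X → ℝ}

lemma aestronglyMeasurable_comp_vadd_restrict (hf : AEStronglyMeasurable f μ) (γ : G) :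
    AEStronglyMeasurable (fun x ↦ f (γ +ᵥ x)) (μ.restrict s) :=
  (hf.comp_measurePreserving (measurePreserving_vadd γ μ)).restrict

variable [Countable G]

lemma tsum_setLIntegral_enorm_vadd_ne_top (hs : IsAddFundamentalDomain G s μ)
    (hf : Integrable f μ) : ∑' γ : G, ∫⁻ x in s, ‖f (γ +ᵥ x)‖ₑ ∂μ ≠ ∞ := by
  rw [← hs.lintegral_eq_tsum'' fun x ↦ ‖f x‖ₑ]
  exact hf.2.ne

lemma ae_summable_vadd (hs : IsAddFundamentalDomain G s μ) (hf : Integrable f μ) :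
    ∀ᵐ x ∂μ.restrict s, Summable fun γ : G ↦ f (γ +ᵥ x) := by
  have summable_norm : ∀ᵐ x ∂μ.restrict s, Summable fun γ : G ↦ ‖f (γ +ᵥ x)‖ :=
    summable_norm_of_tsum_eLpNorm_ne_top le_rfl
      (aestronglyMeasurable_comp_vadd_restrict hf.1) <| by
        simpa only [eLpNorm_one_eq_lintegral_enorm] using tsum_setLIntegral_enorm_vadd_ne_top hs hf
  filter_upwards [summable_norm] with x hx using hx.of_norm

lemma integrableOn_tsum_vadd (hs : IsAddFundamentalDomain G s μ) (hf : Integrable f μ) :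
    IntegrableOn (fun x ↦ ∑' γ : G, f (γ +ᵥ x)) s μ :=
  integrable_tsum (aestronglyMeasurable_comp_vadd_restrict hf.1)
    (tsum_setLIntegral_enorm_vadd_ne_top hs hf)

lemma setIntegral_tsum_vadd (hs : IsAddFundamentalDomain G s μ) (hf : Integrable f μ) :
    ∫ x in s, ∑' γ : G, f (γ +ᵥ x) ∂μ = ∫ x, f x ∂μ := by
  rw [integral_tsum (aestronglyMeasurable_comp_vadd_restrict hf.1)
    (tsum_setLIntegral_enorm_vadd_ne_top hs hf), hs.integral_eq_tsum'' f hf]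

theorem diffEntropy_tsum_vadd_le (hs : IsAddFundamentalDomain G s μ) (hf0 : ∀ x, 0 ≤ f x)
    (hf : Integrable f μ) (hf_ent : Integrable (fun x ↦ negMulLog (f x)) μ)
    (hfold_ent : IntegrableOn (fun x ↦ negMulLog (∑' γ : G, f (γ +ᵥ x))) s μ) :
    diffEntropy (μ.restrict s) (fun x ↦ ∑' γ : G, f (γ +ᵥ x)) ≤ diffEntropy μ f := by
  have pointwise_le : ∀ᵐ x ∂μ.restrict s,
      negMulLog (∑' γ : G, f (γ +ᵥ x)) ≤ ∑' γ : G, negMulLog (f (γ +ᵥ x)) := by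
    filter_upwards [ae_summable_vadd hs hf, ae_summable_vadd hs hf_ent] with x hsum hsum_ent
    exact negMulLog_le_of_hasSum (fun _ ↦ hf0 _) hsum.hasSum hsum_ent.hasSum
  calc ∫ x in s, negMulLog (∑' γ : G, f (γ +ᵥ x)) ∂μ
      ≤ ∫ x in s, ∑' γ : G, negMulLog (f (γ +ᵥ x)) ∂μ :=
        integral_mono_ae hfold_ent (integrableOn_tsum_vadd hs hf_ent) pointwise_le
    _ = ∫ x, negMulLog (f x) ∂μ := setIntegral_tsum_vadd hs hf_ent

end FundamentalDomain

lemma tsum_zmultiples_eq_tsum_sub_int_mul {M : Type*} [AddCommMonoid M] [TopologicalSpace M] {α : ℝ}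
    (hα : α ≠ 0) (f : ℝ → M) (x : ℝ) :
    ∑' γ : AddSubgroup.zmultiples α, f (γ +ᵥ x) = ∑' k : ℤ, f (x - k * α) := by
  have hinj : Function.Injective fun k : ℤ ↦ k • α := smul_left_injective ℤ hα
  let e : ℤ ≃ AddSubgroup.zmultiples α := (Equiv.neg ℤ).trans (Equiv.ofInjective _ hinj)
  have he (k : ℤ) : e k +ᵥ x = x - k * α := by
    change (-k) • α + x = x - k * α
    rw [neg_smul, zsmul_eq_mul]
    ring
  rw [← e.tsum_eq]
  simp only [he]

section GaussianEntropy

variable {v : ℝ≥0}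

lemma negMulLog_gaussianPDFReal (μ : ℝ) (hv : v ≠ 0) (x : ℝ) :
    negMulLog (gaussianPDFReal μ v x) =
      gaussianPDFReal μ v x * (1 / 2 * log (2 * π * v) + (x - μ) ^ 2 / (2 * v)) := by
  have log_pdf : log (gaussianPDFReal μ v x) =
      -(1 / 2 * log (2 * π * v) + (x - μ) ^ 2 / (2 * v)) := by
    rw [gaussianPDFReal, log_mul (by positivity) (by positivity), log_exp, log_inv,
      log_sqrt (by positivity)]
    ring
  rw [negMulLog, log_pdf, neg_mul_neg]

lemma integrable_gaussianReal_iff_integrable_smul {E : Type*} [NormedAddCommGroup E]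
    [NormedSpace ℝ E] {μ : ℝ} (hv : v ≠ 0) {f : ℝ → E} :
    Integrable f (gaussianReal μ v) ↔ Integrable fun x ↦ gaussianPDFReal μ v x • f x := by
  rw [gaussianReal_of_var_ne_zero μ hv, integrable_withDensity_iff_integrable_smul'
    (measurable_gaussianPDF μ v) (ae_of_all _ fun _ ↦ gaussianPDF_lt_top)]
  simp only [toReal_gaussianPDF]

lemma integrable_sub_sq_gaussianReal (μ c : ℝ) (v : ℝ≥0) :
    Integrable (fun x ↦ (x - c) ^ 2) (gaussianReal μ v) :=
  ((memLp_id_gaussianReal 2).sub (memLp_const c)).integrable_sq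

lemma integrable_negMulLog_gaussianPDFReal (μ : ℝ) (hv : v ≠ 0) :
    Integrable fun x ↦ negMulLog (gaussianPDFReal μ v x) := by
  simp only [negMulLog_gaussianPDFReal μ hv]
  exact (integrable_gaussianReal_iff_integrable_smul hv).1
    ((integrable_const _).add ((integrable_sub_sq_gaussianReal μ μ v).div_const _))

theorem diffEntropy_gaussianPDFReal (μ : ℝ) (hv : v ≠ 0) :
    diffEntropy volume (gaussianPDFReal μ v) = 1 / 2 * log (2 * π * exp 1 * v) := by
  have second_moment : ∫ x, (x - μ) ^ 2 ∂gaussianReal μ v = v := by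
    simpa [variance_eq_integral aemeasurable_id] using variance_id_gaussianReal (μ := μ) (v := v)
  have log_split : log (2 * π * exp 1 * v) = log (2 * π * v) + 1 := by
    rw [mul_right_comm, log_mul (by positivity) (by positivity), log_exp]
  calc ∫ x, negMulLog (gaussianPDFReal μ v x)
      = ∫ x, (1 / 2 * log (2 * π * v) + (x - μ) ^ 2 / (2 * v)) ∂gaussianReal μ v := by
        simp only [negMulLog_gaussianPDFReal μ hv, integral_gaussianReal_eq_integral_smul hv,
          smul_eq_mul]
    _ = 1 / 2 * log (2 * π * v) + v / (2 * v) := by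
        rw [integral_add (integrable_const _)
          ((integrable_sub_sq_gaussianReal μ μ v).div_const _), integral_const, integral_div,
          second_moment, probReal_univ, one_smul]
    _ = 1 / 2 * log (2 * π * exp 1 * v) := by
        rw [log_split]
        field_simp

end GaussianEntropy

lemma continuous_evenKernel_coe {t : ℝ} (ht : 0 < t) :
    Continuous fun a : ℝ ↦ HurwitzZeta.evenKernel a t := by
  refine Complex.continuous_re.comp (f := fun a : ℝ ↦ (HurwitzZeta.evenKernel a t : ℂ)) ?_
  simp only [HurwitzZeta.evenKernel_def]
  refine .mul (by fun_prop) (continuous_iff_continuousAt.2 fun a ↦ ?_)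
  exact (continuousAt_jacobiTheta₂ (a * Complex.I * t) (by simpa)).comp
    (f := fun a : ℝ ↦ (a * Complex.I * t, Complex.I * t)) (by fun_prop)

section AliasedGaussian

variable {α σ : ℝ}

lemma gaussDen_eq_gaussianPDFReal (σ : ℝ) :
    gaussDen σ = gaussianPDFReal 0 (σ ^ 2).toNNReal := by
  ext x
  simp [gaussDen, gaussianPDFReal, coe_toNNReal _ (sq_nonneg σ)]

lemma aliasedDen_eq_evenKernel (hα : α ≠ 0) (hσ : σ ≠ 0) (x : ℝ) :
    aliasedDen σ α x = (√(2 * π * σ ^ 2))⁻¹ *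
      HurwitzZeta.evenKernel ((-x / α : ℝ) : UnitAddCircle) (α ^ 2 / (2 * π * σ ^ 2)) := by
  have ht : 0 < α ^ 2 / (2 * π * σ ^ 2) := by positivity
  rw [← (HurwitzZeta.hasSum_int_evenKernel (-x / α) ht).tsum_eq, ← tsum_mul_left]
  refine tsum_congr fun k ↦ ?_
  rw [gaussDen]
  congr 2
  field_simp
  ring

lemma continuous_aliasedDen (hα : α ≠ 0) (hσ : σ ≠ 0) : Continuous (aliasedDen σ α) := by
  have ht : 0 < α ^ 2 / (2 * π * σ ^ 2) := by positivity
  rw [funext (aliasedDen_eq_evenKernel hα hσ)]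
  exact ((continuous_evenKernel_coe ht).comp (by fun_prop)).const_mul _

lemma aliasedEnt_eq_diffEntropy (α σ : ℝ) :
    aliasedEnt α σ = diffEntropy (volume.restrict (Set.Ioc 0 α)) (aliasedDen σ α) := by
  simp only [aliasedEnt, diffEntropy, negMulLog_eq_neg, integral_neg, integral_Ico_eq_integral_Ioc]

lemma diffEntropy_gaussDen (hσ : σ ≠ 0) :
    diffEntropy volume (gaussDen σ) = 1 / 2 * log (2 * π * exp 1 * σ ^ 2) := by
  rw [gaussDen_eq_gaussianPDFReal, diffEntropy_gaussianPDFReal 0 (by simpa),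
    coe_toNNReal _ (sq_nonneg σ)]

end AliasedGaussian

/-- the differential entropy of the `αℤ`-aliased Gaussian noise is at most
the differential entropy `(1/2)·log(2πeσ²)` of the unaliased Gaussian. -/
theorem aliasedEnt_le_gaussian_entropy (α σ : ℝ) (hα : 0 < α) (hσ : 0 < σ) :
    aliasedEnt α σ ≤ (1 / 2 : ℝ) * Real.log (2 * Real.pi * Real.exp 1 * σ ^ 2) := by
  have hv : (σ ^ 2).toNNReal ≠ 0 := by simpa using hσ.ne'
  have hdomain : IsAddFundamentalDomain (AddSubgroup.zmultiples α) (Set.Ioc 0 α) := by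
    simpa only [zero_add] using isAddFundamentalDomain_Ioc hα 0
  have hfold : aliasedDen σ α =
      fun x ↦ ∑' γ : AddSubgroup.zmultiples α, gaussDen σ (γ +ᵥ x) :=
    funext fun x ↦ (tsum_zmultiples_eq_tsum_sub_int_mul hα.ne' (gaussDen σ) x).symm
  have hfold_ent : IntegrableOn (fun x ↦ negMulLog (aliasedDen σ α x)) (Set.Ioc 0 α) :=
    (continuous_negMulLog.comp (continuous_aliasedDen hα.ne' hσ.ne')).integrableOn_Ioc
  rw [aliasedEnt_eq_diffEntropy, ← diffEntropy_gaussDen hσ.ne']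
  rw [hfold] at hfold_ent ⊢
  rw [gaussDen_eq_gaussianPDFReal] at hfold_ent ⊢
  exact diffEntropy_tsum_vadd_le hdomain (gaussianPDFReal_nonneg _ _)
    (integrable_gaussianPDFReal _ _) (integrable_negMulLog_gaussianPDFReal 0 hv) hfold_ent
end
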